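/- For a deterministic multiset acceptor evaluated greedily under confluence, acceptance of a multiset M can be decided by any maximal rewriting sequence from the initial configuration: if the failure-extended rewriting relation is confluent, then M ⊨ (p₀, p) (i.e., (p₀, M) →* (p, ∅)) holds if and only if every maximal rewriting sequence from (p₀, M) ends at (p, ∅). -/

import Mathlib

open Relation

/-- One step of horizontal rewriting. -/
def HStep {P D : Type*} (rules : Set (P × (D → Prop) × P)) :
    P × Multiset D → P × Multiset D → Prop :=
  fun c c' => ∃ d φ, (c.1, φ, c'.1) ∈ rules ∧ φ d ∧ c.2 = c'.2 + {d}

/-- Failure-extended horizontal rewriting on `Option (P × Multiset D)`, where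
`none` is the failure element ⊥: `(p, M) → ⊥` whenever `M ≠ ∅` and no ordinary
step applies. -/
def HStepX {P D : Type*} (rules : Set (P × (D → Prop) × P)) :
    Option (P × Multiset D) → Option (P × Multiset D) → Prop :=
  fun c c' =>
    (∃ a b, c = some a ∧ c' = some b ∧ HStep rules a b) ∨
    (∃ a, c = some a ∧ c' = none ∧ a.2 ≠ 0 ∧ ∀ b, ¬ HStep rules a b)

theorem not_hStep_zero {P D : Type*} {rules : Set (P × (D → Prop) × P)} (p : P)
    (b : P × Multiset D) : ¬ HStep rules (p, 0) b := by
  rintro ⟨d, φ, -, -, h⟩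
  simpa using congrArg Multiset.card h

theorem not_hStepX_some_zero {P D : Type*} {rules : Set (P × (D → Prop) × P)} (p : P)
    (c : Option (P × Multiset D)) : ¬ HStepX rules (some (p, 0)) c := by
  rintro (⟨a, b, ha, -, hab⟩ | ⟨a, ha, -, hne, -⟩)
  · cases ha
    exact not_hStep_zero p b hab
  · cases ha
    exact hne rfl

theorem not_hStepX_none {P D : Type*} {rules : Set (P × (D → Prop) × P)}
    (c : Option (P × Multiset D)) : ¬ HStepX rules none c := by
  rintro (⟨a, b, ha, -⟩ | ⟨a, ha, -⟩) <;> cases ha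

theorem reflTransGen_hStepX_some_iff {P D : Type*} {rules : Set (P × (D → Prop) × P)}
    {a b : P × Multiset D} :
    ReflTransGen (HStepX rules) (some a) (some b) ↔ ReflTransGen (HStep rules) a b := by
  refine ⟨fun h => ?_, fun h => h.lift some fun a b hab => Or.inl ⟨a, b, rfl, rfl, hab⟩⟩
  suffices ∀ c, ReflTransGen (HStepX rules) (some a) c →
      ∀ b, c = some b → ReflTransGen (HStep rules) a b from this _ h b rfl
  intro c hc
  induction hc with
  | refl => rintro b ⟨⟩; exact .refl
  | tail _ hstep ih =>
    rintro b rfl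
    rcases hstep with ⟨a', b', rfl, hb, hab⟩ | ⟨a', -, hb, -⟩
    · cases hb
      exact (ih a' rfl).tail hab
    · cases hb

theorem HStep.card_lt {P D : Type*} {rules : Set (P × (D → Prop) × P)}
    {a b : P × Multiset D} (h : HStep rules a b) :
    Multiset.card b.2 < Multiset.card a.2 := by
  obtain ⟨d, φ, -, -, h⟩ := h
  simp [h]

/-- Every configuration reaches one without successor, since ordinary steps consume elements. -/
theorem exists_reachable_hStepX_normal {P D : Type*} (rules : Set (P × (D → Prop) × P))
    (a : P × Multiset D) :
    ∃ c, ReflTransGen (HStepX rules) (some a) c ∧ ∀ c', ¬ HStepX rules c c' := by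
  by_cases hs : ∃ c, HStepX rules (some a) c
  · obtain ⟨c, hac⟩ := hs
    rcases id hac with ⟨a', b, ha, rfl, hab⟩ | ⟨-, -, rfl, -⟩
    · cases ha
      have := hab.card_lt
      obtain ⟨c, hbc, hc⟩ := exists_reachable_hStepX_normal rules b
      exact ⟨c, .head hac hbc, hc⟩
    · exact ⟨none, .single hac, not_hStepX_none⟩
  · exact ⟨some a, .refl, not_exists.mp hs⟩
termination_by Multiset.card a.2

/-- Under confluence of the failure-extended rewriting relation, acceptance can
be decided by any maximal (greedy) rewriting sequence: `(p₀, M) →* (p, ∅)` iff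
every maximal rewriting sequence from `(p₀, M)` ends at `(p, ∅)`, i.e. every
reachable configuration without successor equals `(p, ∅)`. -/
theorem stmt5 {P D : Type*} (rules : Set (P × (D → Prop) × P))
    (hconf : ∀ x y z, ReflTransGen (HStepX rules) x y → ReflTransGen (HStepX rules) x z →
      ∃ w, ReflTransGen (HStepX rules) y w ∧ ReflTransGen (HStepX rules) z w)
    (p₀ p : P) (M : Multiset D) :
    ReflTransGen (HStep rules) (p₀, M) (p, 0) ↔
      ∀ c, ReflTransGen (HStepX rules) (some (p₀, M)) c →
        (∀ c', ¬ HStepX rules c c') → c = some (p, 0) := by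
  constructor
  · intro h c hc hnormal
    obtain ⟨w, hcw, hpw⟩ := hconf _ _ _ hc (reflTransGen_hStepX_some_iff.mpr h)
    have hw : w = c := (reflTransGen_iff_eq hnormal).mp hcw
    have hw' : w = some (p, 0) := (reflTransGen_iff_eq (not_hStepX_some_zero p)).mp hpw
    exact hw.symm.trans hw'
  · intro h
    obtain ⟨c, hc, hnormal⟩ := exists_reachable_hStepX_normal rules (p₀, M)
    rw [h c hc hnormal] at hc
    exact reflTransGen_hStepX_some_iff.mp hc
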